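/- Let ζ(t) : [0, L_ζ] → ℂ and z(s) : [0, L_z] → ℂ be arc-length parametrizations of two Dini-smooth Jordan arcs that intersect only at the common endpoint z(0) = ζ(0), and suppose the smallest angle formed by the two arcs at this point is μπ ∈ [0, π] (i.e. the angle in [0,π] between the one-sided tangent directions z'(0) and ζ'(0) equals μπ). Then for every ε > 0 there exists δ > 0 such that for every t ∈ (0, δ), the total variation over (0, δ) of any continuous branch of the argument s ↦ arg(z(s) − ζ(t)) is at most π(1−μ) + ε. -/

import Mathlib

open Filter Topology MeasureTheory Set

noncomputable section

/-- The supremum norm of `f` over the set `Γ`. -/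
def supNorm (Γ : Set ℂ) (f : ℂ → ℂ) : ℝ := sSup ((fun z => ‖f z‖) '' Γ)

/-- `Γ` is a Jordan curve: the image of a continuous `2π`-periodic map `ℝ → ℂ` that is
injective modulo the period. -/
def IsJordanCurve (Γ : Set ℂ) : Prop :=
  ∃ f : ℝ → ℂ, Continuous f ∧ Function.Periodic f (2 * Real.pi) ∧
    (∀ s t : ℝ, f s = f t → ∃ n : ℤ, t - s = n * (2 * Real.pi)) ∧
    Γ = Set.range f

/-- The modulus of continuity of `g` on the interval `[a, b]`, evaluated at `t`. -/
def modCont (g : ℝ → ℂ) (a b t : ℝ) : ℝ :=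
  sSup {d : ℝ | ∃ s₁ ∈ Set.Icc a b, ∃ s₂ ∈ Set.Icc a b, |s₁ - s₂| ≤ t ∧ d = ‖g s₁ - g s₂‖}

/-- `γ`, with derivative `γ'`, parametrizes a Dini-smooth Jordan arc on `[a, b]`:
`γ'` is continuous and nonvanishing on `[a, b]` and its modulus of continuity `ω`
satisfies `∫₀¹ ω(t)/t dt < ∞`. -/
structure IsDiniSmoothArc (γ γ' : ℝ → ℂ) (a b : ℝ) : Prop where
  lt : a < b
  inj : Set.InjOn γ (Set.Icc a b)
  deriv : ∀ s ∈ Set.Icc a b, HasDerivWithinAt γ (γ' s) (Set.Icc a b) s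
  cont : ContinuousOn γ' (Set.Icc a b)
  nonzero : ∀ s ∈ Set.Icc a b, γ' s ≠ 0
  dini : MeasureTheory.IntegrableOn (fun t => modCont γ' a b t / t) (Set.Ioc (0 : ℝ) 1)

/-- A piecewise Dini-smooth Jordan curve: a Jordan curve which is the union of finitely many
Dini-smooth arcs. -/
def IsPiecewiseDiniSmoothJordanCurve (Γ : Set ℂ) : Prop :=
  IsJordanCurve Γ ∧
    ∃ (N : ℕ) (γ γ' : Fin N → ℝ → ℂ) (a b : Fin N → ℝ),
      (∀ i, IsDiniSmoothArc (γ i) (γ' i) (a i) (b i)) ∧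
      Γ = ⋃ i, γ i '' Set.Icc (a i) (b i)

/-- The unbounded connected component `Ω` of the complement of `Γ` (in the finite plane). -/
def exteriorDomain (Γ : Set ℂ) : Set ℂ :=
  {z | z ∈ Γᶜ ∧ ¬ Bornology.IsBounded (connectedComponentIn Γᶜ z)}

/-- `φ` is the canonical exterior conformal map of `Γ` onto `{|w| > 1}` with `φ(∞) = ∞` and
`φ(z)/z → c⁻¹` as `z → ∞`; the constant `c` is then the logarithmic capacity of `Γ`. -/
structure IsExteriorMap (Γ : Set ℂ) (φ : ℂ → ℂ) (c : ℝ) : Prop where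
  cpos : 0 < c
  diff : DifferentiableOn ℂ φ (exteriorDomain Γ)
  bij : Set.BijOn φ (exteriorDomain Γ) {w : ℂ | 1 < ‖w‖}
  tendsto : Filter.Tendsto (fun z => φ z / z)
    (Bornology.cobounded ℂ ⊓ Filter.principal (exteriorDomain Γ)) (nhds ((c : ℂ)⁻¹))

/-- `F` is the `n`-th Faber polynomial of `Γ`: the unique polynomial with
`φ(z)^n − F(z) → 0` as `z → ∞` in the exterior domain. -/
def IsFaberPoly (Γ : Set ℂ) (φ : ℂ → ℂ) (n : ℕ) (F : Polynomial ℂ) : Prop :=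
  Filter.Tendsto (fun z => φ z ^ n - F.eval z)
    (Bornology.cobounded ℂ ⊓ Filter.principal (exteriorDomain Γ)) (nhds 0)

/-- `ψ` is the inverse of `φ`, extended to a homeomorphism of `{|w| ≥ 1}` onto the closure
of the exterior domain; on the unit circle it parametrizes `Γ`. -/
structure IsExteriorParam (Γ : Set ℂ) (φ ψ : ℂ → ℂ) : Prop where
  cont : ContinuousOn ψ {w : ℂ | 1 ≤ ‖w‖}
  inj : Set.InjOn ψ {w : ℂ | 1 ≤ ‖w‖}
  inv : ∀ w : ℂ, 1 < ‖w‖ → ψ w ∈ exteriorDomain Γ ∧ φ (ψ w) = w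
  boundary : ∀ w : ℂ, ‖w‖ = 1 → ψ w ∈ Γ
  boundary_surj : ∀ z ∈ Γ, ∃ w : ℂ, ‖w‖ = 1 ∧ ψ w = z

/-- `T` is the `n`-th Chebyshev polynomial of `Γ`: the monic polynomial of degree `n`
minimizing the supremum norm over `Γ`. -/
def IsChebyshevPoly (Γ : Set ℂ) (n : ℕ) (T : Polynomial ℂ) : Prop :=
  T.Monic ∧ T.natDegree = n ∧
    ∀ P : Polynomial ℂ, P.Monic → P.natDegree = n →
      supNorm Γ (fun z => T.eval z) ≤ supNorm Γ (fun z => P.eval z)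

/-- `v` is a secant-argument function of `Γ = ψ(unit circle)` at `θ` (relative to `α` with
`α < θ < α + 2π`): a bounded-variation branch of `t ↦ arg (ψ(e^{it}) − ψ(e^{iθ}))` on
`[α, α + 2π]`, continuous on `[α, θ)` and on `(θ, α + 2π]`, normalized by `v θ = v(θ+)`
and by requiring the jump `v(θ+) − v(θ−)` to lie in `[0, 2π]`. -/
structure IsSecantArg (ψ : ℂ → ℂ) (θ α : ℝ) (v : ℝ → ℝ) : Prop where
  hα : α < θ
  hθ : θ < α + 2 * Real.pi
  bv : BoundedVariationOn v (Set.Icc α (α + 2 * Real.pi))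
  contBefore : ContinuousOn v (Set.Ico α θ)
  contAfter : ContinuousOn v (Set.Ioc θ (α + 2 * Real.pi))
  rightCont : ContinuousWithinAt v (Set.Ici θ) θ
  jump_mem : ∃ L : ℝ, Filter.Tendsto v (nhdsWithin θ (Set.Iio θ)) (nhds L) ∧
    v θ - L ∈ Set.Icc 0 (2 * Real.pi)
  branch : ∀ t ∈ Set.Icc α (α + 2 * Real.pi), t ≠ θ →
    Complex.exp (Complex.I * (v t : ℂ))
      = (ψ (Complex.exp (Complex.I * (t : ℂ))) - ψ (Complex.exp (Complex.I * (θ : ℂ))))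
        / ((‖ψ (Complex.exp (Complex.I * (t : ℂ))) - ψ (Complex.exp (Complex.I * (θ : ℂ)))‖ : ℂ))

/-- The exterior angle of `Γ = ψ(unit circle)` at the boundary point `ψ(e^{iθ})` equals
`lam * π`, expressed through the jump `v(θ+) − v(θ−) = lam * π` of a secant-argument
function at `θ`. -/
def HasExteriorAngleAt (ψ : ℂ → ℂ) (θ lam : ℝ) : Prop :=
  ∃ (α : ℝ) (v : ℝ → ℝ), IsSecantArg ψ θ α v ∧
    Filter.Tendsto v (nhdsWithin θ (Set.Iio θ)) (nhds (v θ - lam * Real.pi))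

/-- The set `Θ_Γ = {θ_k + 2πj}` of corner parameters modulo `2π`. -/
def cornerSet {l : ℕ} (θk : Fin l → ℝ) : Set ℝ :=
  {x | ∃ (k : Fin l) (j : ℤ), x = θk k + j * (2 * Real.pi)}

/-- `(μp, μn)` realizes the Lebesgue–Stieltjes (signed) measure `dv` of `v` on `(α, β]`:
both are finite measures and `μp − μn` has the increments of `v`. -/
structure IsLSPair (v : ℝ → ℝ) (α β : ℝ) (μp μn : MeasureTheory.Measure ℝ) : Prop where
  finp : MeasureTheory.IsFiniteMeasure μp
  finn : MeasureTheory.IsFiniteMeasure μn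
  incr : ∀ s t : ℝ, α ≤ s → s ≤ t → t ≤ β →
    (μp (Set.Ioc s t)).toReal - (μn (Set.Ioc s t)).toReal = v t - v s


theorem eVariationOn_le_ofReal_of_abs_sub_le {f Φ : ℝ → ℝ} {S : Set ℝ} {M : ℝ}
    (hf : ∀ x ∈ S, ∀ y ∈ S, x ≤ y → |f y - f x| ≤ Φ y - Φ x)
    (hM : ∀ x ∈ S, ∀ y ∈ S, x ≤ y → Φ y - Φ x ≤ M) :
    eVariationOn f S ≤ ENNReal.ofReal M := by
  refine iSup_le ?_
  rintro ⟨n, u, hu, huS⟩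
  calc ∑ i ∈ Finset.range n, edist (f (u (i + 1))) (f (u i))
      ≤ ∑ i ∈ Finset.range n, ENNReal.ofReal (Φ (u (i + 1)) - Φ (u i)) := by
        refine Finset.sum_le_sum fun i _ => ?_
        rw [edist_dist, Real.dist_eq]
        exact ENNReal.ofReal_le_ofReal (hf _ (huS i) _ (huS _) (hu i.le_succ))
    _ = ENNReal.ofReal (Φ (u n) - Φ (u 0)) := by
        rw [← ENNReal.ofReal_sum_of_nonneg, Finset.sum_range_sub (fun i => Φ (u i))]
        intro i _
        exact (abs_nonneg _).trans (hf _ (huS i) _ (huS _) (hu i.le_succ))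
    _ ≤ ENNReal.ofReal M :=
        ENNReal.ofReal_le_ofReal (hM _ (huS 0) _ (huS n) (hu n.zero_le))

theorem hasDerivAt_of_exp_eq_div_norm {Q : ℝ → ℂ} {A : ℝ → ℝ} {s : ℝ} {q : ℂ}
    (hQ : HasDerivAt Q q s) (hQs : Q s ≠ 0) (hA : ContinuousAt A s)
    (hbranch : ∀ᶠ x in 𝓝 s, Complex.exp (Complex.I * (A x : ℂ)) = Q x / ((‖Q x‖ : ℝ) : ℂ)) :
    HasDerivAt A (q / Q s).im s := by
  have hdiv : HasDerivAt (fun x => Q x / Q s) (q / Q s) s := hQ.div_const _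
  have hlog := hdiv.clog_real (by rw [div_self hQs]; exact Complex.one_mem_slitPlane)
  rw [div_self hQs, div_one] at hlog
  have him := (Complex.imCLM.hasFDerivAt.comp_hasDerivAt s hlog).const_add (A s)
  refine him.congr_of_eventuallyEq ?_
  have hne : ∀ᶠ x in 𝓝 s, Q x ≠ 0 := hQ.continuousAt.eventually_ne hQs
  have hclose : ∀ᶠ x in 𝓝 s, A x - A s ∈ Ioo (-Real.pi) Real.pi := by
    have : ContinuousAt (fun x => A x - A s) s := hA.sub continuousAt_const
    exact this.eventually_mem (isOpen_Ioo.mem_nhds (by simp [Real.pi_pos]))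
  filter_upwards [hbranch, hne, hclose] with x hx hx0 hxc
  have hpos : 0 < ‖Q x‖ / ‖Q s‖ := div_pos (norm_pos_iff.2 hx0) (norm_pos_iff.2 hQs)
  have hs := hbranch.self_of_nhds
  have hn0 : ((‖Q s‖ : ℝ) : ℂ) ≠ 0 := by simpa using hQs
  have hnx : ((‖Q x‖ : ℝ) : ℂ) ≠ 0 := by simpa using hx0
  have key : Q x / Q s = ((‖Q x‖ / ‖Q s‖ : ℝ) : ℂ) *
      (Complex.cos ((A x - A s : ℝ) : ℂ) + Complex.sin ((A x - A s : ℝ) : ℂ) * Complex.I) := by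
    rw [← Complex.exp_mul_I]
    have : ((A x - A s : ℝ) : ℂ) * Complex.I
        = Complex.I * (A x : ℂ) - Complex.I * (A s : ℂ) := by push_cast; ring
    rw [this, Complex.exp_sub, hx, hs]
    push_cast
    field_simp
  have harg := Complex.arg_mul_cos_add_sin_mul_I hpos (Ioo_subset_Ioc_self hxc)
  rw [← key] at harg
  simp [Complex.log_im, harg]

theorem hasDerivAt_arctan_add_div_abs_im (c : ℂ) (s : ℝ) :
    HasDerivAt (fun x : ℝ => Real.arctan ((c.re + x) / |c.im|)) |(1 / (c + s)).im| s := by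
  rcases eq_or_ne c.im 0 with h | h
  · simpa [h] using hasDerivAt_const s (0 : ℝ)
  · have hb : |c.im| ≠ 0 := abs_ne_zero.2 h
    have h1 : HasDerivAt (fun x : ℝ => (c.re + x) / |c.im|) (1 / |c.im|) s :=
      ((hasDerivAt_id s).const_add c.re).div_const _
    convert h1.arctan using 1
    have hn : 0 < (c.re + s) * (c.re + s) + c.im * c.im :=
      add_pos_of_nonneg_of_pos (mul_self_nonneg _) (mul_self_pos.2 h)
    simp only [one_div, Complex.inv_im, Complex.normSq_apply, Complex.add_re, Complex.add_im,
      Complex.ofReal_re, Complex.ofReal_im, add_zero, abs_div, abs_neg, abs_of_pos hn]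
    have h2 : c.im ^ 2 = |c.im| ^ 2 := (sq_abs _).symm
    have h3 : 0 < 1 + ((c.re + s) / |c.im|) ^ 2 := by positivity
    rw [← pow_two c.im, h2]
    field_simp
    ring

theorem pi_div_two_sub_arctan_eq_abs_arg {c : ℂ} (hc : c.im ≠ 0) :
    Real.pi / 2 - Real.arctan (c.re / |c.im|) = |c.arg| := by
  have hc0 : c ≠ 0 := fun h => hc (by simp [h])
  have hb : 0 < |c.im| := abs_pos.2 hc
  have h1 : √(1 + (c.re / |c.im|) ^ 2) = ‖c‖ / |c.im| := by
    rw [Complex.norm_eq_sqrt_sq_add_sq, eq_div_iff hb.ne']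
    nth_rewrite 2 [← Real.sqrt_sq hb.le]
    rw [← Real.sqrt_mul (by positivity)]
    congr 1
    rw [← sq_abs c.im]
    field_simp
    ring
  have h2 : c.re / |c.im| / (‖c‖ / |c.im|) = Real.cos |c.arg| := by
    rw [Real.cos_abs, Complex.cos_arg hc0]
    field_simp
  rw [Real.arctan_eq_arcsin, h1, h2, ← Real.arccos_eq_pi_div_two_sub_arcsin,
    Real.arccos_cos (abs_nonneg _) (Complex.abs_arg_le_pi c)]

theorem eVariationOn_branch_le_abs_arg_add_integral {Q Q' : ℝ → ℂ} {A φ : ℝ → ℝ} {δ : ℝ} {c : ℂ}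
    (hQ : ∀ s ∈ Ioo 0 δ, HasDerivAt Q (Q' s) s) (hQ' : ContinuousOn Q' (Ioo 0 δ))
    (hQ0 : ∀ s ∈ Ioo 0 δ, Q s ≠ 0) (hA : ContinuousOn A (Ioo 0 δ))
    (hbranch : ∀ s ∈ Ioo 0 δ,
      Complex.exp (Complex.I * (A s : ℂ)) = Q s / ((‖Q s‖ : ℝ) : ℂ))
    (hφ : Integrable φ) (hφ0 : 0 ≤ φ) (hc : ∀ s ∈ Ioo 0 δ, c + s ≠ 0)
    (hcomp : ∀ s ∈ Ioo 0 δ, ‖Q' s / Q s - 1 / (c + s)‖ ≤ φ s) :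
    eVariationOn A (Ioo 0 δ) ≤ ENNReal.ofReal (|c.arg| + ∫ s, φ s) := by
  set C : ℝ → ℝ := fun x => Real.arctan ((c.re + x) / |c.im|) with hCdef
  set C' : ℝ → ℝ := fun s => |(1 / (c + s)).im| with hC'def
  have hQc : ContinuousOn Q (Ioo 0 δ) := fun s hs => (hQ s hs).continuousAt.continuousWithinAt
  have hA'c : ContinuousOn (fun s => (Q' s / Q s).im) (Ioo 0 δ) :=
    Complex.continuous_im.comp_continuousOn (hQ'.div hQc hQ0)
  have hC'c : ContinuousOn C' (Ioo 0 δ) := by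
    refine (Complex.continuous_im.comp_continuousOn (continuousOn_const.div ?_ hc)).abs
    fun_prop
  have hA' : ∀ s ∈ Ioo 0 δ, HasDerivAt A (Q' s / Q s).im s := fun s hs =>
    hasDerivAt_of_exp_eq_div_norm (hQ s hs) (hQ0 s hs)
      (hA.continuousAt (isOpen_Ioo.mem_nhds hs))
      (eventually_of_mem (isOpen_Ioo.mem_nhds hs) hbranch)
  have hsub : ∀ x ∈ Ioo 0 δ, ∀ y ∈ Ioo 0 δ, Icc x y ⊆ Ioo 0 δ := fun x hx y hy =>
    Icc_subset_Ioo hx.1 hy.2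
  refine eVariationOn_le_ofReal_of_abs_sub_le (Φ := fun s => (∫ u in (0 : ℝ)..s, φ u) + C s) ?_ ?_
  · intro x hx y hy hxy
    have hu : uIcc x y ⊆ Ioo 0 δ := by rw [uIcc_of_le hxy]; exact hsub x hx y hy
    have iA : IntervalIntegrable (fun s => (Q' s / Q s).im) volume x y :=
      (hA'c.mono hu).intervalIntegrable
    have iC : IntervalIntegrable C' volume x y := (hC'c.mono hu).intervalIntegrable
    have iφ : IntervalIntegrable φ volume x y := hφ.intervalIntegrable
    rw [← intervalIntegral.integral_eq_sub_of_hasDerivAt (fun s hs => hA' s (hu hs)) iA]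
    have hCint := intervalIntegral.integral_eq_sub_of_hasDerivAt
      (fun s _ => hasDerivAt_arctan_add_div_abs_im c s) iC
    have hφint := intervalIntegral.integral_interval_sub_left
      (hφ.intervalIntegrable (a := 0) (b := y)) (hφ.intervalIntegrable (a := 0) (b := x))
    have h1 := intervalIntegral.norm_integral_le_integral_norm (μ := volume)
      (f := fun s => (Q' s / Q s).im) hxy
    have h2 : ∫ s in x..y, ‖(Q' s / Q s).im‖ ≤ ∫ s in x..y, (φ s + C' s) := by
      refine intervalIntegral.integral_mono_on hxy iA.norm (iφ.add iC) fun s hs => ?_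
      have h3 := hcomp s (hsub x hx y hy hs)
      have h4 := (Complex.abs_im_le_norm _).trans h3
      rw [Complex.sub_im] at h4
      have h5 := abs_sub_abs_le_abs_sub (Q' s / Q s).im (1 / (c + s)).im
      simp only [Real.norm_eq_abs, hC'def]
      linarith
    rw [intervalIntegral.integral_add iφ iC] at h2
    simp only [Real.norm_eq_abs] at h1 h2
    simp only [hCdef]
    linarith
  · intro x hx y hy hxy
    have hφint := intervalIntegral.integral_interval_sub_left
      (hφ.intervalIntegrable (a := 0) (b := y)) (hφ.intervalIntegrable (a := 0) (b := x))
    have h1 : ∫ s in x..y, φ s ≤ ∫ s, φ s := by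
      rw [intervalIntegral.integral_of_le hxy]
      exact setIntegral_le_integral hφ (Eventually.of_forall hφ0)
    have h2 : C y - C x ≤ |c.arg| := by
      rcases eq_or_ne c.im 0 with h | h
      · simp [hCdef, h]
      · rw [← pi_div_two_sub_arctan_eq_abs_arg h]
        have h3 : Real.arctan (c.re / |c.im|) ≤ C x := by
          refine Real.arctan_mono ?_
          gcongr
          linarith [hx.1]
        have h4 : C y < Real.pi / 2 := Real.arctan_lt_pi_div_two _
        linarith
    linarith

theorem norm_div_sub_div_le {v τ Q P : ℂ} {r h : ℝ} (hh : 0 < h) (hτ : ‖τ‖ = 1)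
    (hv : ‖v - τ‖ ≤ r) (hPQ : ‖P - Q‖ ≤ r * h) (hQ : h / 4 ≤ ‖Q‖) (hP : h / 8 ≤ ‖P‖) :
    ‖v / Q - τ / P‖ ≤ 36 * (r / h) := by
  have hQ0 : 0 < ‖Q‖ := by linarith
  have hP0 : 0 < ‖P‖ := by linarith
  have hQ1 : Q ≠ 0 := norm_pos_iff.1 hQ0
  have hP1 : P ≠ 0 := norm_pos_iff.1 hP0
  have hr : 0 ≤ r := (norm_nonneg _).trans hv
  have h0 : v / Q - τ / P = (v - τ) / Q + τ * (P - Q) / (Q * P) := by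
    field_simp
    ring
  have h1 : ‖(v - τ) / Q‖ ≤ r / (h / 4) := by
    rw [norm_div]
    gcongr
  have h2 : ‖τ * (P - Q) / (Q * P)‖ ≤ r * h / (h / 4 * (h / 8)) := by
    rw [norm_div, norm_mul, norm_mul, hτ, one_mul]
    gcongr
  calc ‖v / Q - τ / P‖ ≤ r / (h / 4) + r * h / (h / 4 * (h / 8)) := by
        rw [h0]
        exact (norm_add_le _ _).trans (add_le_add h1 h2)
    _ = 36 * (r / h) := by
        field_simp
        ring

theorem norm_sub_sub_smul_le {γ γ' : ℝ → ℂ} {L r a b : ℝ}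
    (hγ : ∀ s ∈ Icc 0 L, HasDerivWithinAt γ (γ' s) (Icc 0 L) s)
    (ha : a ∈ Icc 0 L) (hb : b ∈ Icc 0 L) (hr : ∀ u ∈ uIcc a b, ‖γ' u - γ' a‖ ≤ r) :
    ‖γ b - γ a - (b - a : ℝ) * γ' a‖ ≤ r * |b - a| := by
  have hsub : uIcc a b ⊆ Icc 0 L := uIcc_subset_Icc ha hb
  have hd : ∀ u ∈ uIcc a b,
      HasDerivWithinAt (fun x : ℝ => γ x - x * γ' a) (γ' u - γ' a) (uIcc a b) u := by
    intro u hu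
    have h1 : HasDerivWithinAt (fun x : ℝ => (x : ℂ) * γ' a) (1 * γ' a) (uIcc a b) u :=
      (Complex.ofRealCLM.hasDerivAt (x := u)).hasDerivWithinAt.mul_const _
    rw [one_mul] at h1
    exact ((hγ u (hsub hu)).mono hsub).sub h1
  have := Convex.norm_image_sub_le_of_norm_hasDerivWithin_le hd hr (convex_uIcc a b)
    left_mem_uIcc right_mem_uIcc
  rw [Real.norm_eq_abs] at this
  have hrw : γ b - γ a - (b - a : ℝ) * γ' a = γ b - b * γ' a - (γ a - a * γ' a) := by
    push_cast
    ring
  rwa [hrw]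

theorem tendsto_setIntegral_Ioc_zero {f : ℝ → ℝ} (hf : IntegrableOn f (Ioc (0 : ℝ) 1)) :
    Tendsto (fun d => ∫ t in Ioc 0 d, f t) (𝓝[>] 0) (𝓝 0) := by
  have h := intervalIntegral.continuousOn_primitive (μ := volume)
    ((integrableOn_Icc_iff_integrableOn_Ioc (by simp)).2 hf) 0 (left_mem_Icc.2 zero_le_one)
  have h' : Tendsto (fun d => ∫ t in Ioc 0 d, f t) (𝓝[Icc 0 1] 0) (𝓝 0) := by
    simpa [ContinuousWithinAt] using h
  refine h'.mono_left ?_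
  rw [← nhdsWithin_Ioc_eq_nhdsGT (zero_lt_one (α := ℝ))]
  exact nhdsWithin_mono _ Ioc_subset_Icc_self

theorem norm_sub_le_modCont {g : ℝ → ℂ} {a b s₁ s₂ t : ℝ} {M : ℝ}
    (hg : ∀ s ∈ Icc a b, ‖g s‖ ≤ M) (h₁ : s₁ ∈ Icc a b) (h₂ : s₂ ∈ Icc a b)
    (ht : |s₁ - s₂| ≤ t) : ‖g s₁ - g s₂‖ ≤ modCont g a b t := by
  refine le_csSup ⟨M + M, ?_⟩ ⟨s₁, h₁, s₂, h₂, ht, rfl⟩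
  rintro d ⟨u, hu, v, hv, -, rfl⟩
  exact (norm_sub_le _ _).trans (add_le_add (hg u hu) (hg v hv))

theorem modCont_nonneg (g : ℝ → ℂ) (a b t : ℝ) : 0 ≤ modCont g a b t := by
  refine Real.sSup_nonneg ?_
  rintro d ⟨u, -, v, -, -, rfl⟩
  exact norm_nonneg _

theorem eVariationOn_branch_le_of_nearest_point {z z' : ℝ → ℂ} {L δ : ℝ} {p : ℂ} {s₀ : ℝ}
    (hδL : δ ≤ L) (hδ1 : δ ≤ 1)
    (hderiv : ∀ s ∈ Icc 0 L, HasDerivWithinAt z (z' s) (Icc 0 L) s)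
    (hcont : ContinuousOn z' (Icc 0 L)) (hunit : ∀ s ∈ Icc 0 L, ‖z' s‖ = 1)
    (hdini : IntegrableOn (fun t => modCont z' 0 L t / t) (Ioc (0 : ℝ) 1))
    (hosc : ∀ u ∈ Icc 0 δ, ∀ v ∈ Icc 0 δ, ‖z' u - z' v‖ ≤ 1 / 8)
    (hp : ∀ s ∈ Icc 0 δ, z s ≠ p) (hs₀ : s₀ ∈ Icc 0 δ)
    (hmin : ∀ s ∈ Icc 0 δ, ‖z s₀ - p‖ ≤ ‖z s - p‖) {A : ℝ → ℝ} (hA : ContinuousOn A (Ioo 0 δ))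
    (hbranch : ∀ s ∈ Ioo 0 δ,
      Complex.exp (Complex.I * (A s : ℂ)) = (z s - p) / ((‖z s - p‖ : ℝ) : ℂ)) :
    eVariationOn A (Ioo 0 δ) ≤ ENNReal.ofReal
      (|((z s₀ - p) / z' s₀ - s₀).arg| + 72 * ∫ t in Ioc 0 δ, modCont z' 0 L t / t) := by
  have hsub : Icc 0 δ ⊆ Icc 0 L := Icc_subset_Icc_right hδL
  set τ := z' s₀ with hτdef
  have hτ : ‖τ‖ = 1 := hunit _ (hsub hs₀)
  have hτ0 : τ ≠ 0 := norm_ne_zero_iff.1 (by rw [hτ]; exact one_ne_zero)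
  set c : ℂ := (z s₀ - p) / τ - s₀ with hcdef
  set G : ℝ → ℝ := (Ioc 0 δ).indicator (fun t => modCont z' 0 L t / t) with hGdef
  have hG : Integrable G :=
    (hdini.mono_set (Ioc_subset_Ioc_right hδ1)).integrable_indicator measurableSet_Ioc
  have hG0 : ∀ x, 0 ≤ G x := fun x =>
    indicator_nonneg (fun y hy => div_nonneg (modCont_nonneg _ _ _ _) hy.1.le) x
  have hGint : ∫ x, G x = ∫ t in Ioc 0 δ, modCont z' 0 L t / t :=
    integral_indicator measurableSet_Ioc
  have hφint : ∫ s, 36 * (G (s - s₀) + G (s₀ - s))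
      = 72 * ∫ t in Ioc 0 δ, modCont z' 0 L t / t := by
    rw [integral_const_mul, integral_add (hG.comp_sub_right s₀) (hG.comp_sub_left s₀),
      integral_sub_right_eq_self, integral_sub_left_eq_self, hGint]
    ring
  have hP : ∀ s : ℝ, τ * (c + s) = z s₀ - p + (s - s₀ : ℝ) * τ := by
    intro s
    rw [hcdef]
    push_cast
    field_simp
    ring
  have hest : ∀ s ∈ Icc 0 δ, s ≠ s₀ → |s - s₀| / 4 ≤ ‖z s - p‖ ∧
      |s - s₀| / 8 ≤ ‖τ * (c + s)‖ ∧ ‖τ * (c + s) - (z s - p)‖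
        ≤ modCont z' 0 L |s - s₀| * |s - s₀| := by
    intro s hs hne
    have hu : uIcc s₀ s ⊆ Icc 0 δ := uIcc_subset_Icc hs₀ hs
    have h1 := norm_sub_sub_smul_le hderiv (hsub hs₀) (hsub hs)
      (fun u huu => hosc u (hu huu) s₀ hs₀)
    have h2 := norm_sub_sub_smul_le hderiv (hsub hs₀) (hsub hs)
      (r := modCont z' 0 L |s - s₀|) (fun u huu =>
        norm_sub_le_modCont (fun s hs => (hunit s hs).le) (hsub (hu huu)) (hsub hs₀)
          (abs_sub_left_of_mem_uIcc huu))
    have h3 : ‖((s - s₀ : ℝ) : ℂ) * τ‖ = |s - s₀| := by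
      rw [norm_mul, hτ, Complex.norm_real, Real.norm_eq_abs, mul_one]
    have h4 : ‖((s - s₀ : ℝ) : ℂ) * τ‖ - ‖z s - z s₀‖ ≤ ‖z s - z s₀ - (s - s₀ : ℝ) * τ‖ := by
      rw [norm_sub_rev (z s - z s₀)]
      exact norm_sub_norm_le _ _
    have h5 : ‖z s - z s₀‖ ≤ ‖z s - p‖ + ‖z s₀ - p‖ := by
      rw [← sub_sub_sub_cancel_right (z s) (z s₀) p]
      exact norm_sub_le _ _
    have h6 := hmin s hs
    have h7 : τ * (c + s) - (z s - p) = -(z s - z s₀ - (s - s₀ : ℝ) * τ) := by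
      rw [hP]
      ring
    have h8 : ‖z s - p‖ - ‖τ * (c + s)‖ ≤ ‖τ * (c + s) - (z s - p)‖ := by
      rw [norm_sub_rev (τ * (c + s))]
      exact norm_sub_norm_le _ _
    rw [h7, norm_neg] at h8 ⊢
    have h9 := abs_nonneg (s - s₀)
    exact ⟨by linarith, by linarith, h2⟩
  have hc : ∀ s ∈ Ioo 0 δ, c + s ≠ 0 := by
    intro s hs
    refine right_ne_zero_of_mul (a := τ) ?_
    rcases eq_or_ne s s₀ with rfl | hne
    · rw [hP]
      simpa [sub_eq_zero] using hp s hs₀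
    · have h1 := (hest s (Ioo_subset_Icc_self hs) hne).2.1
      have h2 : 0 < |s - s₀| := abs_pos.2 (sub_ne_zero.2 hne)
      exact norm_pos_iff.1 (lt_of_lt_of_le (by positivity) h1)
  rw [← hφint]
  refine eVariationOn_branch_le_abs_arg_add_integral (Q := fun s => z s - p) (Q' := z')
    ?_ ((hcont.mono hsub).mono Ioo_subset_Icc_self)
    (fun s hs => sub_ne_zero.2 (hp s (Ioo_subset_Icc_self hs))) hA hbranch
    (((hG.comp_sub_right s₀).add (hG.comp_sub_left s₀)).const_mul 36)
    (fun s => mul_nonneg (by norm_num) (add_nonneg (hG0 _) (hG0 _))) hc ?_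
  · intro s hs
    exact ((hderiv s (hsub (Ioo_subset_Icc_self hs))).hasDerivAt
      (Icc_mem_nhds hs.1 (hs.2.trans_le hδL))).sub_const p
  · intro s hs
    have hs' := Ioo_subset_Icc_self hs
    rcases eq_or_ne s s₀ with rfl | hne
    · have h1 : c + s = (z s - p) / τ := by rw [hcdef]; ring
      rw [h1, one_div_div, sub_self, norm_zero]
      exact mul_nonneg (by norm_num) (add_nonneg (hG0 _) (hG0 _))
    · obtain ⟨h1, h2, h3⟩ := hest s hs' hne
      have hpos : 0 < |s - s₀| := abs_pos.2 (sub_ne_zero.2 hne)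
      have h4 := norm_div_sub_div_le hpos hτ
        (norm_sub_le_modCont (fun s hs => (hunit s hs).le) (hsub hs') (hsub hs₀) le_rfl) h3 h1 h2
      rw [div_mul_cancel_left₀ hτ0, ← one_div] at h4
      refine h4.trans (mul_le_mul_of_nonneg_left ?_ (by norm_num))
      have h5 : |s - s₀| ≤ δ := by
        rw [abs_le]
        constructor <;> linarith [hs'.1, hs'.2, hs₀.1, hs₀.2]
      have h6 : G |s - s₀| = modCont z' 0 L |s - s₀| / |s - s₀| :=
        indicator_of_mem (show |s - s₀| ∈ Ioc 0 δ from ⟨hpos, h5⟩) _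
      rw [← h6]
      rcases abs_choice (s - s₀) with h | h
      · rw [h]
        linarith [hG0 (s₀ - s)]
      · rw [h, neg_sub]
        linarith [hG0 (s - s₀)]

theorem eventually_forall_norm_sub_le {g : ℝ → ℂ} {L η : ℝ} (hL : 0 ≤ L)
    (hg : ContinuousOn g (Icc 0 L)) (hη : 0 < η) :
    ∀ᶠ δ in 𝓝[>] (0 : ℝ), ∀ u ∈ Icc 0 δ, ∀ v ∈ Icc 0 δ, u ≤ L → v ≤ L → ‖g u - g v‖ ≤ η := by
  obtain ⟨d, hd, h⟩ := Metric.continuousWithinAt_iff.1 (hg 0 (left_mem_Icc.2 hL)) (η / 2)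
    (half_pos hη)
  have key : ∀ δ < d, ∀ u ∈ Icc 0 δ, u ≤ L → dist (g u) (g 0) < η / 2 := by
    intro δ hδ u hu huL
    refine h ⟨hu.1, huL⟩ ?_
    rw [Real.dist_0_eq_abs, abs_of_nonneg hu.1]
    exact hu.2.trans_lt hδ
  filter_upwards [Ioo_mem_nhdsGT hd] with δ hδ u hu v hv huL hvL
  rw [← dist_eq_norm]
  linarith [dist_triangle_right (g u) (g v) (g 0), key δ hδ.2 u hu huL, key δ hδ.2 v hv hvL]

/-- Let `ζ : [0, Lζ] → ℂ` and `z : [0, Lz] → ℂ` be arc-length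
parametrizations of two Dini-smooth Jordan arcs intersecting only at the common endpoint
`z(0) = ζ(0)`, and suppose the smallest angle formed by the two arcs there is `μπ ∈ [0, π]`,
i.e. the angle in `[0, π]` between the unit tangents `z'(0)` and `ζ'(0)` equals `μπ`
(equivalently `Re (z'(0) · conj (ζ'(0))) = cos (μπ)`). For every `ε > 0` there exists
`δ > 0` such that for every `t ∈ (0, δ)`, every continuous branch `A` of
`s ↦ arg (z(s) − ζ(t))` on `(0, δ)` has total variation over `(0, δ)` at most
`π(1 − μ) + ε`. -/
theorem argument_variation_near_corner
    (ζ ζ' z z' : ℝ → ℂ) (Lζ Lz μ : ℝ)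
    (hζ : IsDiniSmoothArc ζ ζ' 0 Lζ)
    (hz : IsDiniSmoothArc z z' 0 Lz)
    (hζunit : ∀ s ∈ Set.Icc (0 : ℝ) Lζ, ‖ζ' s‖ = 1)
    (hzunit : ∀ s ∈ Set.Icc (0 : ℝ) Lz, ‖z' s‖ = 1)
    (hmeet : z 0 = ζ 0)
    (hinter : (z '' Set.Icc (0 : ℝ) Lz) ∩ (ζ '' Set.Icc (0 : ℝ) Lζ) = {z 0})
    (hμ : μ ∈ Set.Icc (0 : ℝ) 1)
    (hangle : (z' 0 * starRingEnd ℂ (ζ' 0)).re = Real.cos (μ * Real.pi)) :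
    ∀ ε : ℝ, 0 < ε → ∃ δ : ℝ, 0 < δ ∧ δ ≤ Lζ ∧ δ ≤ Lz ∧
      ∀ t ∈ Set.Ioo (0 : ℝ) δ, ∀ A : ℝ → ℝ,
        ContinuousOn A (Set.Ioo (0 : ℝ) δ) →
        (∀ s ∈ Set.Ioo (0 : ℝ) δ,
          Complex.exp (Complex.I * (A s : ℂ)) = (z s - ζ t) / ((‖z s - ζ t‖ : ℝ) : ℂ)) →
        eVariationOn A (Set.Ioo (0 : ℝ) δ)
          ≤ ENNReal.ofReal (Real.pi * (1 - μ) + ε) := by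
  intro ε hε
  have h0ζ : (0 : ℝ) ∈ Icc 0 Lζ := left_mem_Icc.2 hζ.lt.le
  have h0z : (0 : ℝ) ∈ Icc 0 Lz := left_mem_Icc.2 hz.lt.le
  have hang : InnerProductGeometry.angle (-ζ' 0) (z' 0) = Real.pi * (1 - μ) := by
    have h1 : InnerProductGeometry.angle (ζ' 0) (z' 0) = μ * Real.pi := by
      rw [InnerProductGeometry.angle, Complex.inner, hζunit 0 h0ζ, hzunit 0 h0z, hangle,
        one_mul, div_one, Real.arccos_cos (by have := hμ.1; positivity)]
      nlinarith [hμ.2, Real.pi_pos]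
    rw [InnerProductGeometry.angle_neg_left, h1]
    ring
  have hcontAngle : ContinuousAt (fun y : ℂ × ℂ => InnerProductGeometry.angle y.1 y.2)
      (-ζ' 0, z' 0) :=
    InnerProductGeometry.continuousAt_angle (neg_ne_zero.2 (hζ.nonzero 0 h0ζ)) (hz.nonzero 0 h0z)
  obtain ⟨η₁, hη₁, hη₁angle⟩ := Metric.continuousAt_iff.1 hcontAngle (ε / 2) (half_pos hε)
  obtain ⟨η, hη, hη8, hη10⟩ : ∃ η : ℝ, 0 < η ∧ η ≤ 1 / 8 ∧ η ≤ η₁ / 10 :=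
    ⟨min (1 / 8) (η₁ / 10), by positivity, min_le_left _ _, min_le_right _ _⟩
  have hint : ∀ᶠ δ in 𝓝[>] (0 : ℝ), ∫ t in Ioc 0 δ, modCont z' 0 Lz t / t < ε / 144 :=
    (tendsto_setIntegral_Ioc_zero hz.dini).eventually_lt_const (by positivity)
  obtain ⟨δ, hδint, hδz, hδζ, hδ0, hδ⟩ := (hint.and
    ((eventually_forall_norm_sub_le hz.lt.le hz.cont hη).and
      ((eventually_forall_norm_sub_le hζ.lt.le hζ.cont hη).and
        (Ioo_mem_nhdsGT (lt_min (lt_min hζ.lt hz.lt) one_pos))))).exists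
  obtain ⟨⟨hδLζ, hδLz⟩, hδ1⟩ := (by simpa using hδ : (δ < Lζ ∧ δ < Lz) ∧ δ < 1)
  refine ⟨δ, hδ0, hδLζ.le, hδLz.le, fun t ht A hA hbranch => ?_⟩
  have hsub : Icc 0 δ ⊆ Icc 0 Lz := Icc_subset_Icc_right hδLz.le
  have ht' : t ∈ Icc 0 Lζ := ⟨ht.1.le, (ht.2.trans hδLζ).le⟩
  have hosc : ∀ u ∈ Icc 0 δ, ∀ v ∈ Icc 0 δ, ‖z' u - z' v‖ ≤ η := fun u hu v hv =>
    hδz u hu v hv (hsub hu).2 (hsub hv).2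
  have hp : ∀ s ∈ Icc 0 δ, z s ≠ ζ t := by
    intro s hs h
    have h1 : z s ∈ z '' Icc 0 Lz ∩ ζ '' Icc 0 Lζ :=
      ⟨mem_image_of_mem z (hsub hs), h ▸ mem_image_of_mem ζ ht'⟩
    rw [hinter, mem_singleton_iff, h, hmeet] at h1
    exact ht.1.ne' (hζ.inj ht' h0ζ h1)
  have hzc : ContinuousOn z (Icc 0 Lz) := fun s hs => (hz.deriv s hs).continuousWithinAt
  have h0δ : (0 : ℝ) ∈ Icc 0 δ := left_mem_Icc.2 hδ0.le
  obtain ⟨s₀, hs₀, hmin⟩ := isCompact_Icc.exists_isMinOn ⟨0, h0δ⟩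
    (((hzc.mono hsub).sub continuousOn_const).norm : ContinuousOn (fun s => ‖z s - ζ t‖) _)
  have hmin' : ∀ s ∈ Icc 0 δ, ‖z s₀ - ζ t‖ ≤ ‖z s - ζ t‖ := fun s hs => hmin hs
  refine (eVariationOn_branch_le_of_nearest_point hδLz.le hδ1.le hz.deriv hz.cont hzunit hz.dini
    (fun u hu v hv => (hosc u hu v hv).trans hη8) hp hs₀ hmin' hA hbranch).trans
    (ENNReal.ofReal_le_ofReal ?_)
  set τ := z' s₀ with hτdef
  have hτ : ‖τ‖ = 1 := hzunit _ (hsub hs₀)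
  have hτ0 : τ ≠ 0 := hz.nonzero _ (hsub hs₀)
  set P : ℂ := z s₀ - ζ t - s₀ * τ with hPdef
  have hz1 := norm_sub_sub_smul_le hz.deriv (hsub hs₀) h0z
    (fun u hu => hosc u (uIcc_subset_Icc hs₀ h0δ hu) s₀ hs₀)
  have hζ1 := norm_sub_sub_smul_le hζ.deriv h0ζ ht' (r := η) (fun u hu => by
    have hu' : u ∈ Icc 0 δ := uIcc_subset_Icc h0δ ⟨ht.1.le, ht.2.le⟩ hu
    exact hδζ u hu' 0 h0δ (hu'.2.trans hδLζ.le) hζ.lt.le)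
  rw [zero_sub, abs_neg, abs_of_nonneg hs₀.1, ← hτdef] at hz1
  rw [sub_zero, abs_of_pos ht.1] at hζ1
  have hs₀t : s₀ ≤ 4 * t := by
    have h1 : ‖((-s₀ : ℝ) : ℂ) * τ‖ = s₀ := by
      rw [norm_mul, hτ, Complex.norm_real, norm_neg, Real.norm_of_nonneg hs₀.1, mul_one]
    have h2 : ‖(t : ℂ) * ζ' 0‖ = t := by
      rw [norm_mul, hζunit 0 h0ζ, Complex.norm_real, Real.norm_of_nonneg ht.1.le, mul_one]
    have h3 := norm_sub_norm_le (((-s₀ : ℝ) : ℂ) * τ) (z 0 - z s₀)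
    rw [norm_sub_rev (((-s₀ : ℝ) : ℂ) * τ)] at h3
    have h4 := norm_sub_norm_le (ζ t - ζ 0) (t * ζ' 0)
    have h5 : ‖z 0 - z s₀‖ ≤ ‖z 0 - ζ t‖ + ‖z s₀ - ζ t‖ := by
      rw [← sub_sub_sub_cancel_right (z 0) (z s₀) (ζ t)]
      exact norm_sub_le _ _
    have h6 := hmin' 0 h0δ
    rw [hmeet, norm_sub_rev (ζ 0) (ζ t)] at h5 h6
    rw [hmeet] at h3 hz1
    have h7 := mul_le_mul_of_nonneg_right hη8 hs₀.1
    have h8 := mul_le_mul_of_nonneg_right hη8 ht.1.le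
    linarith [ht.1]
  have hPt : ‖P + t * ζ' 0‖ ≤ 5 * η * t := by
    have h1 : P + t * ζ' 0
        = -(z 0 - z s₀ - ((-s₀ : ℝ) : ℂ) * τ) - (ζ t - ζ 0 - t * ζ' 0) := by
      rw [hPdef, hmeet]
      push_cast
      ring
    have h2 := norm_sub_le (-(z 0 - z s₀ - ((-s₀ : ℝ) : ℂ) * τ)) (ζ t - ζ 0 - t * ζ' 0)
    rw [← h1, norm_neg] at h2
    nlinarith [mul_le_mul_of_nonneg_left hs₀t hη.le]
  have htc : (t : ℂ) ≠ 0 := by exact_mod_cast ht.1.ne'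
  have hdist : dist (t⁻¹ • P, τ) (-ζ' 0, z' 0) < η₁ := by
    rw [Prod.dist_eq, max_lt_iff]
    constructor
    · have h1 : t⁻¹ • P - -ζ' 0 = t⁻¹ • (P + t * ζ' 0) := by
        simp only [Complex.real_smul, Complex.ofReal_inv]
        field_simp
        ring
      simp only [dist_eq_norm]
      rw [h1, norm_smul, norm_inv, Real.norm_of_nonneg ht.1.le]
      calc t⁻¹ * ‖P + t * ζ' 0‖ ≤ t⁻¹ * (5 * η * t) := by
            gcongr
            exact inv_nonneg.2 ht.1.le
        _ = 5 * η := by have := ht.1.ne'; field_simp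
        _ < η₁ := by linarith
    · simp only [dist_eq_norm]
      linarith [hosc s₀ hs₀ 0 h0δ]
  have hangle' := hη₁angle hdist
  simp only [hang] at hangle'
  rw [InnerProductGeometry.angle_smul_left_of_pos _ _ (inv_pos.2 ht.1), Real.dist_eq] at hangle'
  have hP0 : P ≠ 0 := by
    intro h
    rw [h, zero_add, norm_mul, hζunit 0 h0ζ, Complex.norm_real, Real.norm_of_nonneg ht.1.le] at hPt
    nlinarith [ht.1]
  have hPc : P / τ = (z s₀ - ζ t) / τ - s₀ := by
    rw [hPdef]
    field_simp
  rw [Complex.angle_eq_abs_arg hP0 hτ0, hPc] at hangle'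
  linarith [(abs_lt.1 hangle').2]

end
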